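/- Let η : ℝ³ → ℝ³ be a C² map with invertible Jacobian ∇η at every point (entries ∂_l η_i), A := (∇η)⁻¹, ∂_i^η g := ∑_k A_{ki} ∂_k g, and let v : ℝ³ → ℝ³ be a C² vector field satisfying the transformed divergence-free condition ∑_{j=1}^{3} ∂_j^η v_j = 0 everywhere. Then for each i ∈ {1,2,3}, the transformed Laplacian equals the transformed divergence of the symmetric gradient: ∑_{j=1}^{3} ∂_j^η ∂_j^η v_i = ∑_{j=1}^{3} ∂_j^η ( (sym^η v)_{ij} ) at every point, where (sym^η v)_{ij} := ∂_j^η v_i + ∂_i^η v_j. -/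

import Mathlib

open scoped Matrix BigOperators

/-- Partial derivative `∂_l f` of a scalar function on `ℝ³`. -/
noncomputable def pd (f : (Fin 3 → ℝ) → ℝ) (l : Fin 3) (x : Fin 3 → ℝ) : ℝ :=
  fderiv ℝ f x (Pi.single l 1)

/-- Jacobian matrix `∇η` with entries `(∇η)_{il} = ∂_l η_i`. -/
noncomputable def Jac (η : (Fin 3 → ℝ) → Fin 3 → ℝ) (x : Fin 3 → ℝ) :
    Matrix (Fin 3) (Fin 3) ℝ :=
  Matrix.of fun i l => pd (fun y => η y i) l x

/-- Transformed derivative `∂_i^η g = ∑_k A_{ki} ∂_k g`, where `A = (∇η)⁻¹`. -/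
noncomputable def Deta (η : (Fin 3 → ℝ) → Fin 3 → ℝ) (f : (Fin 3 → ℝ) → ℝ)
    (i : Fin 3) (x : Fin 3 → ℝ) : ℝ :=
  ∑ k, (Jac η x)⁻¹ k i * pd f k x


lemma pd_contDiff {f : (Fin 3 → ℝ) → ℝ} (hf : ContDiff ℝ 2 f) (k : Fin 3) :
    ContDiff ℝ 1 (pd f k) := by
  have h : ContDiff ℝ 1 (fderiv ℝ f) := hf.fderiv_right (by norm_num)
  exact h.clm_apply contDiff_const

lemma pd_differentiable {f : (Fin 3 → ℝ) → ℝ} (hf : ContDiff ℝ 2 f) (k : Fin 3) :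
    Differentiable ℝ (pd f k) := (pd_contDiff hf k).differentiable (by norm_num)

lemma pd_comm {f : (Fin 3 → ℝ) → ℝ} (hf : ContDiff ℝ 2 f) (k l : Fin 3) (x : Fin 3 → ℝ) :
    pd (pd f k) l x = pd (pd f l) k x := by
  have h : ContDiff ℝ 1 (fderiv ℝ f) := hf.fderiv_right (by norm_num)
  have hd : DifferentiableAt ℝ (fderiv ℝ f) x := h.differentiable (by norm_num) x
  have key : ∀ a b : Fin 3, pd (pd f a) b x
      = fderiv ℝ (fderiv ℝ f) x (Pi.single b 1) (Pi.single a 1) := by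
    intro a b
    have e : pd f a = fun y => fderiv ℝ f y (Pi.single a 1) := rfl
    rw [e]
    unfold pd
    rw [fderiv_clm_apply hd (differentiableAt_const _)]
    simp
  rw [key, key]
  have hs : IsSymmSndFDerivAt ℝ f x :=
    hf.contDiffAt.isSymmSndFDerivAt (by simp)
  exact hs.eq _ _

lemma inv_differentiable (η : (Fin 3 → ℝ) → Fin 3 → ℝ) (hη : ContDiff ℝ 2 η)
    (hinv : ∀ x, IsUnit (Jac η x)) (k i : Fin 3) :
    Differentiable ℝ (fun y => (Jac η y)⁻¹ k i) := by
  have hJ : ∀ a b, Differentiable ℝ (fun y => Jac η y a b) := fun a b =>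
    pd_differentiable (contDiff_pi.1 hη a) b
  have hdet : Differentiable ℝ (fun y => (Jac η y).det) := by
    simp only [Matrix.det_fin_three]
    fun_prop
  have hadj : Differentiable ℝ (fun y => (Jac η y).adjugate k i) := by
    simp only [Matrix.adjugate_fin_three]
    fin_cases k <;> fin_cases i <;> simp <;> fun_prop
  have hne : ∀ y, (Jac η y).det ≠ 0 := fun y =>
    ((Matrix.isUnit_iff_isUnit_det _).1 (hinv y)).ne_zero
  simp only [Matrix.inv_def, Ring.inverse_eq_inv', Matrix.smul_apply, smul_eq_mul]
  exact (hdet.inv hne).mul hadj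

lemma Deta_differentiable (η : (Fin 3 → ℝ) → Fin 3 → ℝ) (hη : ContDiff ℝ 2 η)
    (hinv : ∀ x, IsUnit (Jac η x)) {f : (Fin 3 → ℝ) → ℝ} (hf : ContDiff ℝ 2 f) (i : Fin 3) :
    Differentiable ℝ (Deta η f i) := by
  have h1 := fun k => inv_differentiable η hη hinv k i
  have h2 := fun k => pd_differentiable hf k
  have h3 : Differentiable ℝ (fun y => ∑ k, (Jac η y)⁻¹ k i * pd f k y) :=
    Differentiable.fun_sum fun k _ => (h1 k).fun_mul (h2 k)
  exact h3

lemma pd_add {f g : (Fin 3 → ℝ) → ℝ} (hf : Differentiable ℝ f) (hg : Differentiable ℝ g)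
    (k : Fin 3) (x : Fin 3 → ℝ) : pd (fun y => f y + g y) k x = pd f k x + pd g k x := by
  unfold pd
  rw [fderiv_fun_add (hf x) (hg x)]
  rfl

lemma pd_mul {f g : (Fin 3 → ℝ) → ℝ} (hf : Differentiable ℝ f) (hg : Differentiable ℝ g)
    (k : Fin 3) (x : Fin 3 → ℝ) :
    pd (fun y => f y * g y) k x = pd f k x * g x + f x * pd g k x := by
  unfold pd
  rw [fderiv_fun_mul (hf x) (hg x)]
  simp
  ring

lemma pd_sum {f : Fin 3 → (Fin 3 → ℝ) → ℝ} (hf : ∀ i, Differentiable ℝ (f i))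
    (k : Fin 3) (x : Fin 3 → ℝ) :
    pd (fun y => ∑ i, f i y) k x = ∑ i, pd (f i) k x := by
  unfold pd
  rw [fderiv_fun_sum (fun i _ => hf i x)]
  simp

lemma pd_eq_sum (η : (Fin 3 → ℝ) → Fin 3 → ℝ) (hinv : ∀ x, IsUnit (Jac η x))
    (f : (Fin 3 → ℝ) → ℝ) (k : Fin 3) :
    pd f k = fun y => ∑ i, Jac η y i k * Deta η f i y := by
  funext y
  have h1 : (fun i => Deta η f i y) = (fun k => pd f k y) ᵥ* (Jac η y)⁻¹ := by
    funext i
    simp [Deta, Matrix.vecMul, dotProduct, mul_comm]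
  have h2 : (fun i => Deta η f i y) ᵥ* Jac η y = (fun k => pd f k y) := by
    rw [h1, Matrix.vecMul_vecMul,
      Matrix.nonsing_inv_mul _ ((Matrix.isUnit_iff_isUnit_det _).1 (hinv y)), Matrix.vecMul_one]
  have h3 := congrFun h2 k
  simp only [Matrix.vecMul, dotProduct] at h3
  rw [← h3]
  exact Finset.sum_congr rfl fun i _ => mul_comm _ _

lemma Deta_comm (η : (Fin 3 → ℝ) → Fin 3 → ℝ) (hη : ContDiff ℝ 2 η)
    (hinv : ∀ x, IsUnit (Jac η x)) {f : (Fin 3 → ℝ) → ℝ} (hf : ContDiff ℝ 2 f)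
    (i j : Fin 3) (x : Fin 3 → ℝ) :
    Deta η (Deta η f i) j x = Deta η (Deta η f j) i x := by
  have hg := fun i => Deta_differentiable η hη hinv hf i
  have hηc := fun a => contDiff_pi.1 hη a
  have hJ : ∀ a b, Differentiable ℝ (fun y => Jac η y a b) := fun a b =>
    pd_differentiable (hηc a) b
  have hexp : ∀ k l, pd (pd f k) l x = ∑ a, pd (pd (fun y => η y a) k) l x * Deta η f a x
      + ∑ a, Jac η x a k * pd (Deta η f a) l x := by
    intro k l
    conv_lhs => rw [pd_eq_sum η hinv f k]
    rw [pd_sum (fun a => (hJ a k).fun_mul (hg a)), ← Finset.sum_add_distrib]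
    refine Finset.sum_congr rfl fun a _ => ?_
    exact pd_mul (hJ a k) (hg a) l x
  let G : Matrix (Fin 3) (Fin 3) ℝ := Matrix.of fun a l => pd (Deta η f a) l x
  have hsym : (Jac η x)ᵀ * G = Gᵀ * Jac η x := by
    ext k l
    have h1 := hexp k l
    have h2 := hexp l k
    rw [pd_comm hf k l] at h1
    simp only [fun a => pd_comm (hηc a) k l x] at h1
    have h3 : ∑ a, Jac η x a k * pd (Deta η f a) l x
        = ∑ a, Jac η x a l * pd (Deta η f a) k x := by linarith
    simp only [Matrix.mul_apply, Matrix.transpose_apply, G, Matrix.of_apply]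
    rw [h3]
    exact Finset.sum_congr rfl fun i _ => mul_comm _ _
  have hu := (Matrix.isUnit_iff_isUnit_det _).1 (hinv x)
  have hJA := Matrix.mul_nonsing_inv _ hu
  have hAJ : ((Jac η x)⁻¹)ᵀ * (Jac η x)ᵀ = 1 := by
    rw [← Matrix.transpose_mul, hJA, Matrix.transpose_one]
  have hfin : G * (Jac η x)⁻¹ = (G * (Jac η x)⁻¹)ᵀ := by
    calc G * (Jac η x)⁻¹
        = (((Jac η x)⁻¹)ᵀ * (Jac η x)ᵀ) * G * (Jac η x)⁻¹ := by rw [hAJ, one_mul]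
      _ = ((Jac η x)⁻¹)ᵀ * ((Jac η x)ᵀ * G) * (Jac η x)⁻¹ := by simp only [mul_assoc]
      _ = ((Jac η x)⁻¹)ᵀ * Gᵀ * (Jac η x * (Jac η x)⁻¹) := by rw [hsym]; simp only [mul_assoc]
      _ = (G * (Jac η x)⁻¹)ᵀ := by rw [hJA, mul_one, Matrix.transpose_mul]
  have hD : ∀ a b, Deta η (Deta η f a) b x = (G * (Jac η x)⁻¹) a b := by
    intro a b
    simp only [Matrix.mul_apply, G, Matrix.of_apply]
    exact Finset.sum_congr rfl fun i _ => mul_comm _ _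
  rw [hD, hD, hfin, Matrix.transpose_apply, ← hfin]

/-- If `div^η v = 0`, then `Δ^η v = div^η (sym^η v)`:
`∑_j ∂_j^η ∂_j^η v_i = ∑_j ∂_j^η ( ∂_j^η v_i + ∂_i^η v_j )`. -/
theorem laplacian_eq_div_sym
    (η : (Fin 3 → ℝ) → Fin 3 → ℝ) (hη : ContDiff ℝ 2 η)
    (hinv : ∀ x, IsUnit (Jac η x))
    (v : (Fin 3 → ℝ) → Fin 3 → ℝ) (hv : ContDiff ℝ 2 v)
    (hdiv : ∀ x, ∑ j, Deta η (fun z => v z j) j x = 0)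
    (i : Fin 3) (x : Fin 3 → ℝ) :
    ∑ j, Deta η (fun y => Deta η (fun z => v z i) j y) j x
      = ∑ j, Deta η
          (fun y => Deta η (fun z => v z i) j y + Deta η (fun z => v z j) i y) j x := by
  have hvc := fun a => contDiff_pi.1 hv a
  have hD := fun a b => Deta_differentiable η hη hinv (hvc a) b
  have hadd : ∀ j, Deta η
      (fun y => Deta η (fun z => v z i) j y + Deta η (fun z => v z j) i y) j x
      = Deta η (Deta η (fun z => v z i) j) j x + Deta η (Deta η (fun z => v z j) j) i x := by
    intro j
    rw [Deta_comm η hη hinv (hvc j) j i x]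
    conv_lhs => unfold Deta
    change ∑ k, (Jac η x)⁻¹ k j * pd (fun y => Deta η (fun z => v z i) j y
      + Deta η (fun z => v z j) i y) k x = _
    simp only [pd_add (hD i j) (hD j i), mul_add, Finset.sum_add_distrib]
    rfl
  have hz : ∑ j, Deta η (Deta η (fun z => v z j) j) i x = 0 := by
    have h0 : (fun y => ∑ j, Deta η (fun z => v z j) j y) = fun _ => 0 := funext hdiv
    have h1 : ∀ k, ∑ j, pd (Deta η (fun z => v z j) j) k x = 0 := by
      intro k
      rw [← pd_sum (fun j => hD j j), h0]
      simp [pd]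
    change ∑ j, ∑ k, (Jac η x)⁻¹ k i * pd (Deta η (fun z => v z j) j) k x = 0
    rw [Finset.sum_comm]
    simp only [← Finset.mul_sum, h1, mul_zero, Finset.sum_const_zero]
  simp only [hadd, Finset.sum_add_distrib, hz, add_zero]
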